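/- arXiv:1208.2162 — 3 statements merged into one kernel-verified Lean document; each statement's English description precedes it below -/
import Mathlib

section
/- Let d ≥ 1 and let Λ be a trace-preserving linear map on d×d complex matrices. Then the Choi–Jamiołkowski matrix (id⊗Λ)(P₊) is a QC state if and only if (id⊗Λ)(ρ) is a QC state for every bipartite state ρ on ℂ^d ⊗ ℂ^d. -/
open Matrix Kronecker BigOperators
open scoped ComplexOrder

noncomputable section

/-- Rank-one projector `|v⟩⟨v|`. -/
def proj {n : Type*} (v : n → ℂ) : Matrix n n ℂ :=
  Matrix.of fun a b => v a * star (v b)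

/-- `e` is an orthonormal basis (an orthonormal family of `d` vectors) of `ℂ^d`. -/
def ONB (d : ℕ) (e : Fin d → Fin d → ℂ) : Prop :=
  ∀ i j, star (e i) ⬝ᵥ e j = if i = j then 1 else 0

/-- A quantum state: positive semidefinite with unit trace. -/
def IsState {n : Type*} [Fintype n] [DecidableEq n] (ρ : Matrix n n ℂ) : Prop :=
  ρ.PosSemidef ∧ ρ.trace = 1

/-- The maximally entangled projector `P₊ = (1/d) ∑_{i,j} |ii⟩⟨jj|`. -/
def Pplus (d : ℕ) : Matrix (Fin d × Fin d) (Fin d × Fin d) ℂ :=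
  Matrix.of fun p q => if p.1 = p.2 ∧ q.1 = q.2 then (d : ℂ)⁻¹ else 0

/-- `id ⊗ Λ`: the extension of `Λ` acting on the second tensor factor. -/
def idTensor {dA dB : ℕ}
    (Λ : Matrix (Fin dB) (Fin dB) ℂ → Matrix (Fin dB) (Fin dB) ℂ)
    (M : Matrix (Fin dA × Fin dB) (Fin dA × Fin dB) ℂ) :
    Matrix (Fin dA × Fin dB) (Fin dA × Fin dB) ℂ :=
  Matrix.of fun p q => Λ (Matrix.of fun b b' => M (p.1, b) (q.1, b')) p.2 q.2

/-- `Λ ⊗ id`: the extension of `Λ` acting on the first tensor factor. -/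
def tensorId {dA dB : ℕ}
    (Λ : Matrix (Fin dA) (Fin dA) ℂ → Matrix (Fin dA) (Fin dA) ℂ)
    (M : Matrix (Fin dA × Fin dB) (Fin dA × Fin dB) ℂ) :
    Matrix (Fin dA × Fin dB) (Fin dA × Fin dB) ℂ :=
  Matrix.of fun p q => Λ (Matrix.of fun a a' => M (a, p.2) (a', q.2)) p.1 q.1

/-- Partial trace over the first factor. -/
def ptraceA {dA dB : ℕ} (M : Matrix (Fin dA × Fin dB) (Fin dA × Fin dB) ℂ) :
    Matrix (Fin dB) (Fin dB) ℂ :=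
  Matrix.of fun b b' => ∑ a, M (a, b) (a, b')

/-- Partial trace over the second factor. -/
def ptraceB {dA dB : ℕ} (M : Matrix (Fin dA × Fin dB) (Fin dA × Fin dB) ℂ) :
    Matrix (Fin dA) (Fin dA) ℂ :=
  Matrix.of fun a a' => ∑ b, M (a, b) (a', b)

/-- Trace preserving map. -/
def TracePreserving {d : ℕ}
    (Λ : Matrix (Fin d) (Fin d) ℂ → Matrix (Fin d) (Fin d) ℂ) : Prop :=
  ∀ X, (Λ X).trace = X.trace

/-- QC (quantum–classical) bipartite state. -/
def IsQC {dA dB : ℕ} (σ : Matrix (Fin dA × Fin dB) (Fin dA × Fin dB) ℂ) : Prop :=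
  ∃ (e : Fin dB → Fin dB → ℂ) (p : Fin dB → ℝ)
    (ρ : Fin dB → Matrix (Fin dA) (Fin dA) ℂ),
    ONB dB e ∧ (∀ i, 0 ≤ p i) ∧ (∑ i, p i) = 1 ∧ (∀ i, IsState (ρ i)) ∧
      σ = ∑ i, (p i : ℂ) • (ρ i ⊗ₖ proj (e i))

/-- CQ (classical–quantum) bipartite state. -/
def IsCQ {dA dB : ℕ} (σ : Matrix (Fin dA × Fin dB) (Fin dA × Fin dB) ℂ) : Prop :=
  ∃ (e : Fin dA → Fin dA → ℂ) (p : Fin dA → ℝ)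
    (ρ : Fin dA → Matrix (Fin dB) (Fin dB) ℂ),
    ONB dA e ∧ (∀ i, 0 ≤ p i) ∧ (∑ i, p i) = 1 ∧ (∀ i, IsState (ρ i)) ∧
      σ = ∑ i, (p i : ℂ) • (proj (e i) ⊗ₖ ρ i)

/-- CC (classical–classical) bipartite state. -/
def IsCC {dA dB : ℕ} (σ : Matrix (Fin dA × Fin dB) (Fin dA × Fin dB) ℂ) : Prop :=
  ∃ (e : Fin dA → Fin dA → ℂ) (f : Fin dB → Fin dB → ℂ) (p : Fin dA → Fin dB → ℝ),
    ONB dA e ∧ ONB dB f ∧ (∀ i j, 0 ≤ p i j) ∧ (∑ i, ∑ j, p i j) = 1 ∧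
      σ = ∑ i, ∑ j, (p i j : ℂ) • (proj (e i) ⊗ₖ proj (f j))

/-!
By Choi–Jamiołkowski, if `(id ⊗ Λ)(P₊) = ∑ₖ Gₖ ⊗ |eₖ⟩⟨eₖ|` with `Gₖ ≥ 0`, then `Λ` measures and
prepares: `Λ X = ∑ₖ tr(Fₖ X) |eₖ⟩⟨eₖ|` with effects `Fₖ = d Gₖᵀ ≥ 0`. Hence
`(id ⊗ Λ)(ρ) = ∑ₖ tr_B((1 ⊗ Fₖ) ρ) ⊗ |eₖ⟩⟨eₖ|`, whose blocks are positive, so it is QC in the same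
basis `e` for every state `ρ`; trace preservation normalises it. Conversely `P₊` is itself a state.
-/

section States

variable {n : Type*}

lemma posSemidef_proj [Finite n] (v : n → ℂ) : (proj v).PosSemidef :=
  posSemidef_vecMulVec_self_star v

variable [Fintype n]

lemma trace_proj (v : n → ℂ) : (proj v).trace = star v ⬝ᵥ v :=
  (trace_vecMulVec v (star v)).trans (dotProduct_comm v (star v))

variable [DecidableEq n]

lemma isState_inv_trace_smul {M : Matrix n n ℂ} (hM : M.PosSemidef) (hM₀ : M.trace ≠ 0) :
    IsState (M.trace⁻¹ • M) :=
  ⟨hM.smul (inv_nonneg.2 hM.trace_nonneg), by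
    rw [trace_smul, smul_eq_mul, inv_mul_cancel₀ hM₀]⟩

lemma exists_isState [Nonempty n] : ∃ ρ : Matrix n n ℂ, IsState ρ :=
  ⟨_, isState_inv_trace_smul PosSemidef.one (by simp)⟩

lemma exists_eq_smul_isState [Nonempty n] {M : Matrix n n ℂ} (hM : M.PosSemidef) :
    ∃ (p : ℝ) (ρ : Matrix n n ℂ), 0 ≤ p ∧ IsState ρ ∧ M = (p : ℂ) • ρ := by
  obtain hM₀ | hM₀ := eq_or_ne M.trace 0
  · obtain ⟨ρ, hρ⟩ := exists_isState (n := n)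
    exact ⟨0, ρ, le_rfl, hρ, by simpa using hM.trace_eq_zero_iff.1 hM₀⟩
  · obtain ⟨p, hp, hpM⟩ := RCLike.nonneg_iff_exists_ofReal.1 hM.trace_nonneg
    refine ⟨p, M.trace⁻¹ • M, hp, isState_inv_trace_smul hM hM₀, ?_⟩
    rw [show (p : ℂ) = M.trace from hpM, smul_inv_smul₀ hM₀]

end States

section MaximallyEntangled

lemma pplus_eq_smul_proj (d : ℕ) :
    Pplus d = (d : ℂ)⁻¹ • proj fun p : Fin d × Fin d => if p.1 = p.2 then 1 else 0 := by
  ext p q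
  by_cases hp : p.1 = p.2 <;> by_cases hq : q.1 = q.2 <;> simp [Pplus, proj, hp, hq]

lemma isState_pplus {d : ℕ} (hd : d ≠ 0) : IsState (Pplus d) := by
  have htrace : (proj fun p : Fin d × Fin d => if p.1 = p.2 then (1 : ℂ) else 0).trace = d := by
    simp [trace_proj, dotProduct, Fintype.sum_prod_type]
  rw [pplus_eq_smul_proj, ← htrace]
  exact isState_inv_trace_smul (posSemidef_proj _) (by simpa [htrace] using hd)

end MaximallyEntangled

section QuantumClassical

variable {dA dB : ℕ}

lemma trace_sum_kronecker_proj {e : Fin dB → Fin dB → ℂ} (he : ONB dB e)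
    (G : Fin dB → Matrix (Fin dA) (Fin dA) ℂ) :
    (∑ k, G k ⊗ₖ proj (e k)).trace = ∑ k, (G k).trace := by
  simp [trace_sum, trace_kronecker, trace_proj, he _ _]

lemma isQC_iff_trace_eq_one_and_exists_posSemidef
    {σ : Matrix (Fin dA × Fin dB) (Fin dA × Fin dB) ℂ} :
    IsQC σ ↔ σ.trace = 1 ∧ ∃ (e : Fin dB → Fin dB → ℂ) (G : Fin dB → Matrix (Fin dA) (Fin dA) ℂ),
      ONB dB e ∧ (∀ k, (G k).PosSemidef) ∧ σ = ∑ k, G k ⊗ₖ proj (e k) := by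
  constructor
  · rintro ⟨e, p, ρ, he, hp, hp_sum, hρ, hσ⟩
    simp only [← smul_kronecker] at hσ
    refine ⟨?_, e, fun k => (p k : ℂ) • ρ k, he,
      fun k => (hρ k).1.smul (Complex.zero_le_real.2 (hp k)), hσ⟩
    rw [hσ, trace_sum_kronecker_proj he]
    simp only [trace_smul, (hρ _).2, smul_eq_mul, mul_one]
    exact_mod_cast hp_sum
  · rintro ⟨hσ_trace, e, G, he, hG, hσ⟩
    have hA : Nonempty (Fin dA) := by
      refine not_isEmpty_iff.1 fun _ => ?_
      simp [trace] at hσ_trace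
    choose p ρ hp hρ hG_eq using fun k => exists_eq_smul_isState (hG k)
    refine ⟨e, p, ρ, he, hp, ?_, hρ, ?_⟩
    · rw [hσ, trace_sum_kronecker_proj he] at hσ_trace
      simp only [hG_eq, trace_smul, (hρ _).2, smul_eq_mul, mul_one] at hσ_trace
      exact_mod_cast hσ_trace
    · simp only [hσ, hG_eq, smul_kronecker]

end QuantumClassical

section Steering

variable {dA dB : ℕ}

lemma posSemidef_ptraceB {M : Matrix (Fin dA × Fin dB) (Fin dA × Fin dB) ℂ}
    (hM : M.PosSemidef) : (ptraceB M).PosSemidef := by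
  have hsum : ptraceB M = ∑ b, M.submatrix (·, b) (·, b) := by
    ext a a'
    simp [ptraceB, Matrix.sum_apply]
  rw [hsum]
  exact posSemidef_sum _ fun b _ => hM.submatrix (·, b)

lemma ptraceB_one_kronecker_mul_comm (B : Matrix (Fin dB) (Fin dB) ℂ)
    (M : Matrix (Fin dA × Fin dB) (Fin dA × Fin dB) ℂ) :
    ptraceB ((1 ⊗ₖ B) * M) = ptraceB (M * (1 ⊗ₖ B)) := by
  ext a a'
  simp only [ptraceB, of_apply, mul_apply, kroneckerMap_apply, one_apply, Fintype.sum_prod_type,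
    ite_mul, mul_ite, one_mul, zero_mul, mul_zero, Finset.sum_ite_irrel, Finset.sum_const_zero,
    Finset.sum_ite_eq, Finset.sum_ite_eq', Finset.mem_univ, if_true]
  rw [Finset.sum_comm]
  simp only [mul_comm]

/-- The unnormalised state `tr_B((1 ⊗ F) ρ)` to which the first factor is steered when a measurement
of the second factor yields the outcome with effect `F`. -/
def steer (F : Matrix (Fin dB) (Fin dB) ℂ) (ρ : Matrix (Fin dA × Fin dB) (Fin dA × Fin dB) ℂ) :
    Matrix (Fin dA) (Fin dA) ℂ :=
  ptraceB ((1 ⊗ₖ F) * ρ)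

lemma steer_apply (F : Matrix (Fin dB) (Fin dB) ℂ)
    (ρ : Matrix (Fin dA × Fin dB) (Fin dA × Fin dB) ℂ) (a a' : Fin dA) :
    steer F ρ a a' = (F * of fun b b' => ρ (a, b) (a', b')).trace := by
  simp [steer, ptraceB, trace, mul_apply, one_apply, Fintype.sum_prod_type]

-- Writing `F = Bᴴ B`, cyclicity turns the steered state into `tr_B((1 ⊗ B) ρ (1 ⊗ B)ᴴ)`.
lemma posSemidef_steer {F : Matrix (Fin dB) (Fin dB) ℂ} (hF : F.PosSemidef)
    {ρ : Matrix (Fin dA × Fin dB) (Fin dA × Fin dB) ℂ} (hρ : ρ.PosSemidef) :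
    (steer F ρ).PosSemidef := by
  obtain ⟨B, rfl⟩ : ∃ B : Matrix (Fin dB) (Fin dB) ℂ, F = Bᴴ * B := by
    open scoped MatrixOrder in
    exact CStarAlgebra.nonneg_iff_eq_star_mul_self.1 hF.nonneg
  let W : Matrix (Fin dA × Fin dB) (Fin dA × Fin dB) ℂ := 1 ⊗ₖ B
  have hconj : steer (Bᴴ * B) ρ = ptraceB (W * ρ * Wᴴ) := calc
    steer (Bᴴ * B) ρ = ptraceB ((1 ⊗ₖ Bᴴ) * (W * ρ)) := by
      rw [steer, ← Matrix.mul_assoc, ← mul_kronecker_mul, Matrix.one_mul]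
    _ = ptraceB (W * ρ * (1 ⊗ₖ Bᴴ)) := ptraceB_one_kronecker_mul_comm _ _
    _ = ptraceB (W * ρ * Wᴴ) := by rw [conjTranspose_kronecker, conjTranspose_one]
  rw [hconj]
  exact posSemidef_ptraceB (hρ.mul_mul_conjTranspose_same W)

lemma steer_pplus {d : ℕ} (F : Matrix (Fin d) (Fin d) ℂ) :
    steer F (Pplus d) = (d : ℂ)⁻¹ • Fᵀ := by
  ext i j
  simp [steer_apply, Pplus, trace, mul_apply, ite_and, mul_comm]

end Steering

section MeasureAndPrepare

/-- The measure-and-prepare map `X ↦ ∑ₖ tr(Fₖ X) Pₖ`. Neither positivity nor `∑ₖ Fₖ = 1` is built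
in, so the map need not be a channel. -/
def measurePrepare {ι m n : Type*} [Fintype ι] [Fintype m] (F : ι → Matrix m m ℂ)
    (P : ι → Matrix n n ℂ) : Matrix m m ℂ →ₗ[ℂ] Matrix n n ℂ :=
  ∑ k, (traceLinearMap m ℂ ℂ ∘ₗ LinearMap.mulLeft ℂ (F k)).smulRight (P k)

lemma measurePrepare_apply {ι m n : Type*} [Fintype ι] [Fintype m] (F : ι → Matrix m m ℂ)
    (P : ι → Matrix n n ℂ) (X : Matrix m m ℂ) :
    measurePrepare F P X = ∑ k, (F k * X).trace • P k := by
  simp [measurePrepare]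

variable {dA dB d : ℕ}

lemma idTensor_measurePrepare {ι : Type*} [Fintype ι] (F P : ι → Matrix (Fin dB) (Fin dB) ℂ)
    (ρ : Matrix (Fin dA × Fin dB) (Fin dA × Fin dB) ℂ) :
    idTensor (measurePrepare F P) ρ = ∑ k, steer (F k) ρ ⊗ₖ P k := by
  ext ⟨a, b⟩ ⟨a', b'⟩
  simp [idTensor, measurePrepare_apply, Matrix.sum_apply, steer_apply]

lemma trace_idTensor {Λ : Matrix (Fin dB) (Fin dB) ℂ → Matrix (Fin dB) (Fin dB) ℂ}
    (hΛ : TracePreserving Λ) (M : Matrix (Fin dA × Fin dB) (Fin dA × Fin dB) ℂ) :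
    (idTensor Λ M).trace = M.trace := by
  simp only [trace, Fintype.sum_prod_type]
  exact Finset.sum_congr rfl fun a _ => hΛ (of fun b b' => M (a, b) (a, b'))

lemma idTensor_pplus_apply (Λ : Matrix (Fin d) (Fin d) ℂ →ₗ[ℂ] Matrix (Fin d) (Fin d) ℂ)
    (i b j b' : Fin d) :
    idTensor Λ (Pplus d) (i, b) (j, b') = (d : ℂ)⁻¹ * Λ (single i j 1) b b' := by
  have hblock : (of fun b b' => Pplus d (i, b) (j, b')) = (d : ℂ)⁻¹ • single i j (1 : ℂ) := by
    ext b b'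
    simp [Pplus, single_apply]
  simp only [idTensor, of_apply, hblock, map_smul, Matrix.smul_apply, smul_eq_mul]

lemma idTensor_pplus_injective :
    Function.Injective fun Λ : Matrix (Fin d) (Fin d) ℂ →ₗ[ℂ] Matrix (Fin d) (Fin d) ℂ =>
      idTensor Λ (Pplus d) := by
  intro Λ Γ h
  refine ext_linearMap ℂ fun i j => LinearMap.ext_ring ?_
  ext b b'
  have hd : (d : ℂ)⁻¹ ≠ 0 := inv_ne_zero (Nat.cast_ne_zero.2 i.pos.ne')
  have hentry := congr_fun₂ h (i, b) (j, b')
  simp only [idTensor_pplus_apply] at hentry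
  exact mul_left_cancel₀ hd hentry

lemma eq_measurePrepare_of_idTensor_pplus_eq {ι : Type*} [Fintype ι]
    {Λ : Matrix (Fin d) (Fin d) ℂ →ₗ[ℂ] Matrix (Fin d) (Fin d) ℂ}
    {G P : ι → Matrix (Fin d) (Fin d) ℂ} (h : idTensor Λ (Pplus d) = ∑ k, G k ⊗ₖ P k) :
    Λ = measurePrepare (fun k => (d : ℂ) • (G k)ᵀ) P := by
  refine idTensor_pplus_injective ?_
  obtain rfl | hd := eq_or_ne d 0
  · exact Subsingleton.elim _ _
  · simp only [h, idTensor_measurePrepare, steer_pplus, transpose_smul, transpose_transpose,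
      inv_smul_smul₀ (Nat.cast_ne_zero.2 hd : (d : ℂ) ≠ 0)]

lemma isQC_idTensor_of_isQC_idTensor_pplus
    {Λ : Matrix (Fin d) (Fin d) ℂ →ₗ[ℂ] Matrix (Fin d) (Fin d) ℂ} (hΛ : TracePreserving Λ)
    (hQC : IsQC (idTensor Λ (Pplus d))) {ρ : Matrix (Fin dA × Fin d) (Fin dA × Fin d) ℂ}
    (hρ : IsState ρ) : IsQC (idTensor Λ ρ) := by
  obtain ⟨-, e, G, he, hG, hchoi⟩ := isQC_iff_trace_eq_one_and_exists_posSemidef.1 hQC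
  have hF (k) : ((d : ℂ) • (G k)ᵀ).PosSemidef := (hG k).transpose.smul (Nat.cast_nonneg d)
  refine isQC_iff_trace_eq_one_and_exists_posSemidef.2
    ⟨(trace_idTensor hΛ ρ).trans hρ.2, e, fun k => steer ((d : ℂ) • (G k)ᵀ) ρ, he,
      fun k => posSemidef_steer (hF k) hρ.1, ?_⟩
  rw [eq_measurePrepare_of_idTensor_pplus_eq hchoi, idTensor_measurePrepare]

end MeasureAndPrepare

/-- A trace-preserving map's Choi–Jamiołkowski matrix is QC iff the map
sends every bipartite state to a QC state. -/
theorem qc_breaking_iff_choi_qc (d : ℕ) (hd : 1 ≤ d)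
    (Λ : Matrix (Fin d) (Fin d) ℂ →ₗ[ℂ] Matrix (Fin d) (Fin d) ℂ)
    (hTP : TracePreserving (⇑Λ)) :
    IsQC (idTensor (⇑Λ) (Pplus d)) ↔
      ∀ ρ : Matrix (Fin d × Fin d) (Fin d × Fin d) ℂ, IsState ρ →
        IsQC (idTensor (⇑Λ) ρ) :=
  ⟨fun hQC _ hρ => isQC_idTensor_of_isQC_idTensor_pplus hTP hQC hρ,
    fun h => h _ (isState_pplus (Nat.one_le_iff_ne_zero.1 hd))⟩

end
end

section
/- Let Λ be a linear map on d×d complex matrices whose Choi–Jamiołkowski matrix is QC: (id⊗Λ)(P₊) = ∑_i p_i σ_i ⊗ |e_i⟩⟨e_i| with {e_i} an orthonormal basis of ℂ^d, σ_i states, and (p_i) a probability distribution. Then Λ is a measurement map: for every d×d matrix ρ, Λ(ρ) = ∑_i Tr(ρ E_i) |e_i⟩⟨e_i|, where E_i := d·p_i·σ_iᵀ and the transpose is taken in the standard basis. -/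
open Matrix Kronecker BigOperators
open scoped ComplexOrder

noncomputable section

/-! For the map `ρ ↦ Tr_A((ρᵀ ⊗ 1) M)` attached to a bipartite matrix `M`, replacing `M` by
`(id ⊗ Λ) M` amounts to composing with `Λ`. Since `P₊` gives `ρ ↦ d⁻¹ ρ`, the Choi matrix of `Λ`
recovers `Λ` through `Λ ρ = d · Tr_A((ρᵀ ⊗ 1) (id ⊗ Λ)(P₊))`, and a product term `A ⊗ B` of that
matrix contributes `d · Tr(ρᵀ A) B = d · Tr(ρ Aᵀ) B`. -/

section PartialTrace

variable {dA dB : ℕ}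

lemma ptraceA_sum {ι : Type*} (s : Finset ι)
    (M : ι → Matrix (Fin dA × Fin dB) (Fin dA × Fin dB) ℂ) :
    ptraceA (∑ i ∈ s, M i) = ∑ i ∈ s, ptraceA (M i) := by
  ext b b'
  simp only [ptraceA, of_apply, Matrix.sum_apply]
  exact Finset.sum_comm

lemma ptraceA_kronecker (A : Matrix (Fin dA) (Fin dA) ℂ) (B : Matrix (Fin dB) (Fin dB) ℂ) :
    ptraceA (A ⊗ₖ B) = A.trace • B := by
  ext b b'
  simp [ptraceA, trace, Finset.sum_mul]

lemma ptraceA_kronecker_one_mul (A : Matrix (Fin dA) (Fin dA) ℂ)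
    (M : Matrix (Fin dA × Fin dB) (Fin dA × Fin dB) ℂ) :
    ptraceA ((A ⊗ₖ 1) * M) =
      ∑ a, ∑ a', A a a' • M.submatrix (Prod.mk a') (Prod.mk a) := by
  ext b b'
  simp [ptraceA, mul_apply, Matrix.sum_apply, Fintype.sum_prod_type, one_apply]

lemma ptraceA_kronecker_one_mul_idTensor
    (Λ : Matrix (Fin dB) (Fin dB) ℂ →ₗ[ℂ] Matrix (Fin dB) (Fin dB) ℂ)
    (A : Matrix (Fin dA) (Fin dA) ℂ) (M : Matrix (Fin dA × Fin dB) (Fin dA × Fin dB) ℂ) :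
    ptraceA ((A ⊗ₖ 1) * idTensor Λ M) = Λ (ptraceA ((A ⊗ₖ 1) * M)) := by
  have block_idTensor (a a' : Fin dA) :
      (idTensor Λ M).submatrix (Prod.mk a) (Prod.mk a') =
        Λ (M.submatrix (Prod.mk a) (Prod.mk a')) := rfl
  simp only [ptraceA_kronecker_one_mul, block_idTensor, map_sum, map_smul]

end PartialTrace

section Choi

variable {d : ℕ}

lemma Pplus_submatrix_mk (a a' : Fin d) :
    (Pplus d).submatrix (Prod.mk a) (Prod.mk a') = (d : ℂ)⁻¹ • single a a' 1 := by
  ext b b'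
  simp [Pplus, single_apply]

lemma ptraceA_transpose_kronecker_one_mul_Pplus (ρ : Matrix (Fin d) (Fin d) ℂ) :
    ptraceA ((ρᵀ ⊗ₖ 1) * Pplus d) = (d : ℂ)⁻¹ • ρ := by
  calc ptraceA ((ρᵀ ⊗ₖ 1) * Pplus d)
      = ∑ a, ∑ a', ρ a' a • (d : ℂ)⁻¹ • single a' a (1 : ℂ) := by
        simp only [ptraceA_kronecker_one_mul, Pplus_submatrix_mk, transpose_apply]
    _ = (d : ℂ)⁻¹ • ∑ a', ∑ a, single a' a (ρ a' a) := by
        rw [Finset.sum_comm]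
        simp only [smul_single, smul_eq_mul, mul_one, Finset.smul_sum, mul_comm]
    _ = (d : ℂ)⁻¹ • ρ := by rw [← matrix_eq_sum_single]

lemma apply_eq_smul_ptraceA_idTensor_Pplus
    (Λ : Matrix (Fin d) (Fin d) ℂ →ₗ[ℂ] Matrix (Fin d) (Fin d) ℂ)
    (ρ : Matrix (Fin d) (Fin d) ℂ) :
    Λ ρ = (d : ℂ) • ptraceA ((ρᵀ ⊗ₖ 1) * idTensor Λ (Pplus d)) := by
  obtain rfl | hd := eq_or_ne d 0
  · exact Subsingleton.elim _ _
  · rw [ptraceA_kronecker_one_mul_idTensor, ptraceA_transpose_kronecker_one_mul_Pplus, map_smul,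
      smul_inv_smul₀ (Nat.cast_ne_zero.mpr hd)]

theorem qc_choi_implies_measurement_map_general {ι : Type*} [Fintype ι]
    (Λ : Matrix (Fin d) (Fin d) ℂ →ₗ[ℂ] Matrix (Fin d) (Fin d) ℂ)
    (A B : ι → Matrix (Fin d) (Fin d) ℂ)
    (hChoi : idTensor Λ (Pplus d) = ∑ i, A i ⊗ₖ B i) (ρ : Matrix (Fin d) (Fin d) ℂ) :
    Λ ρ = ∑ i, (ρ * ((d : ℂ) • (A i)ᵀ)).trace • B i := by
  have trace_move_transpose (i : ι) : (ρᵀ * A i).trace = (ρ * (A i)ᵀ).trace := by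
    rw [← trace_transpose_mul, transpose_transpose]
  calc Λ ρ = (d : ℂ) • ptraceA ((ρᵀ ⊗ₖ 1) * ∑ i, A i ⊗ₖ B i) := by
        rw [apply_eq_smul_ptraceA_idTensor_Pplus, hChoi]
    _ = (d : ℂ) • ∑ i, (ρᵀ * A i).trace • B i := by
        simp only [Finset.mul_sum, ← mul_kronecker_mul, Matrix.one_mul, ptraceA_sum,
          ptraceA_kronecker]
    _ = ∑ i, (ρ * ((d : ℂ) • (A i)ᵀ)).trace • B i := by
        simp only [trace_move_transpose, Finset.smul_sum, Matrix.mul_smul, trace_smul, smul_assoc]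

end Choi

/-- A map whose Choi–Jamiołkowski matrix is QC is a measurement map:
`Λ(ρ) = ∑ᵢ Tr(ρ Eᵢ) |eᵢ⟩⟨eᵢ|` with `Eᵢ := d·pᵢ·σᵢᵀ`. -/
theorem qc_choi_implies_measurement_map (d : ℕ)
    (Λ : Matrix (Fin d) (Fin d) ℂ →ₗ[ℂ] Matrix (Fin d) (Fin d) ℂ)
    (e : Fin d → Fin d → ℂ) (he : ONB d e)
    (p : Fin d → ℝ) (hp0 : ∀ i, 0 ≤ p i) (hp1 : ∑ i, p i = 1)
    (σ : Fin d → Matrix (Fin d) (Fin d) ℂ) (hσ : ∀ i, IsState (σ i))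
    (hChoi : idTensor (⇑Λ) (Pplus d) = ∑ i, (p i : ℂ) • (σ i ⊗ₖ proj (e i))) :
    ∀ ρ : Matrix (Fin d) (Fin d) ℂ,
      Λ ρ = ∑ i, (ρ * ((d : ℂ) • (p i : ℂ) • (σ i)ᵀ)).trace • proj (e i) := by
  simp only [← smul_kronecker] at hChoi
  simpa only [transpose_smul] using qc_choi_implies_measurement_map_general Λ _ _ hChoi

end
end

section
/- Let σ = ∑_j q_j ρ_j ⊗ |f_j⟩⟨f_j| be a QC state on ℂ^{d_A} ⊗ ℂ^{d_B}, where {f_j} is an orthonormal basis of ℂ^{d_B}, each ρ_j is a state on ℂ^{d_A}, and (q_j) is a probability distribution with all q_j > 0. Then σ is a CC state if and only if the residual states pairwise commute: ρ_j ρ_{j'} = ρ_{j'} ρ_j for all j, j'. -/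
open Matrix Kronecker BigOperators
open scoped ComplexOrder

noncomputable section

/-!
Sandwiching the second factor between `⟨f j|` and `|f j⟩` sends `σ` to `q j • ρ j`, and sends every
product `|e i⟩⟨e i| ⊗ |g k⟩⟨g k|` to a multiple of `|e i⟩⟨e i|`. If `σ` is CC with first basis `e`,
then, as `q j ≠ 0`, all the `ρ j` are diagonal in `e`. Conversely, if all the `ρ j` are
diagonal in one basis `e`, their eigenvalue distributions, weighted by `q`, write `σ` as a CC state.
A common diagonalizing basis exists exactly when the Hermitian matrices `ρ j` commute.
-/

section RankOne

variable {n : Type*}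

lemma proj_eq_vecMulVec (v : n → ℂ) : proj v = vecMulVec v (star v) := rfl

variable [Fintype n]

lemma proj_mulVec (v w : n → ℂ) : proj v *ᵥ w = (star v ⬝ᵥ w) • v := by
  rw [proj_eq_vecMulVec, vecMulVec_mulVec, op_smul_eq_smul]

lemma mul_proj_of_mulVec_eq_smul {X : Matrix n n ℂ} {v : n → ℂ} {c : ℂ}
    (hv : X *ᵥ v = c • v) : X * proj v = c • proj v := by
  rw [proj_eq_vecMulVec, mul_vecMulVec, hv, smul_vecMulVec]

lemma proj_mul_proj_of_dotProduct_eq_zero {v w : n → ℂ} (hvw : star v ⬝ᵥ w = 0) :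
    proj v * proj w = 0 := by
  rw [proj_eq_vecMulVec w, mul_vecMulVec, proj_mulVec, hvw, zero_smul, zero_vecMulVec]

end RankOne

namespace ONB

variable {d : ℕ} {e : Fin d → Fin d → ℂ}

lemma star_dotProduct_self (he : ONB d e) (i : Fin d) : star (e i) ⬝ᵥ e i = 1 := by
  rw [he, if_pos rfl]

lemma star_dotProduct_of_ne (he : ONB d e) {i j : Fin d} (hij : i ≠ j) :
    star (e i) ⬝ᵥ e j = 0 := by
  rw [he, if_neg hij]

lemma trace_proj_eq_one (he : ONB d e) (i : Fin d) : (proj (e i)).trace = 1 := by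
  rw [trace_proj, he.star_dotProduct_self]

lemma proj_mulVec_eq_ite (he : ONB d e) (i j : Fin d) :
    proj (e i) *ᵥ e j = if i = j then e j else 0 := by
  rw [proj_mulVec, he, ite_smul, one_smul, zero_smul]
  split_ifs with hij
  · rw [hij]
  · rfl

lemma commute_proj (he : ONB d e) (i j : Fin d) : Commute (proj (e i)) (proj (e j)) := by
  obtain rfl | hij := eq_or_ne i j
  · exact Commute.refl _
  · rw [Commute, SemiconjBy,
      proj_mul_proj_of_dotProduct_eq_zero (he.star_dotProduct_of_ne hij),
      proj_mul_proj_of_dotProduct_eq_zero (he.star_dotProduct_of_ne hij.symm)]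

lemma sum_proj (he : ONB d e) : ∑ i, proj (e i) = 1 := by
  let U : Matrix (Fin d) (Fin d) ℂ := Matrix.of fun a i => e i a
  have hU : Uᴴ * U = 1 := by
    ext i j
    rw [one_apply, ← he i j]
    rfl
  calc ∑ i, proj (e i) = U * Uᴴ := by
        ext a b
        simp only [Matrix.sum_apply, mul_apply, proj, U, Matrix.of_apply, conjTranspose_apply]
    _ = 1 := mul_eq_one_comm.1 hU

lemma eq_sum_smul_proj_of_mulVec_eq_smul (he : ONB d e) {X : Matrix (Fin d) (Fin d) ℂ}
    {c : Fin d → ℂ} (hX : ∀ i, X *ᵥ e i = c i • e i) : X = ∑ i, c i • proj (e i) :=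
  calc X = X * ∑ i, proj (e i) := by rw [he.sum_proj, mul_one]
    _ = ∑ i, c i • proj (e i) := by
      rw [Finset.mul_sum]
      exact Finset.sum_congr rfl fun i _ => mul_proj_of_mulVec_eq_smul (hX i)

lemma sum_smul_proj_mulVec (he : ONB d e) (c : Fin d → ℂ) (j : Fin d) :
    (∑ i, c i • proj (e i)) *ᵥ e j = c j • e j := by
  simp only [sum_mulVec, smul_mulVec, he.proj_mulVec_eq_ite, smul_ite, smul_zero,
    Finset.sum_ite_eq', Finset.mem_univ, if_true]

end ONB

section SimultaneousDiagonalization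

open scoped Function

theorem exists_orthonormalBasis_joint_eigenvectors {𝕜 E ι : Type*} [RCLike 𝕜]
    [NormedAddCommGroup E] [InnerProductSpace 𝕜 E] [FiniteDimensional 𝕜 E]
    {T : ι → E →ₗ[𝕜] E} (hT : ∀ j, (T j).IsSymmetric) (hcomm : Pairwise (Commute on T))
    {d : ℕ} (hd : Module.finrank 𝕜 E = d) :
    ∃ (b : OrthonormalBasis (Fin d) 𝕜 E) (χ : ι → Fin d → 𝕜), ∀ j i, T j (b i) = χ j i • b i := by
  classical
  have horth := LinearMap.IsSymmetric.orthogonalFamily_iInf_eigenspaces hT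
  have hinternal := LinearMap.IsSymmetric.directSum_isInternal_of_pairwise_commute hT hcomm
  -- A finite index type is obtained by discarding the zero joint eigenspaces.
  have hinternal' := DirectSum.isInternal_ne_bot_iff.2 hinternal
  have horth' := horth.comp (Subtype.val_injective
    (p := fun χ : ι → 𝕜 => (⨅ j, Module.End.eigenspace (T j) (χ j)) ≠ ⊥))
  let := hinternal.submodule_iSupIndep.fintypeNeBotOfFiniteDimensional
  refine ⟨hinternal'.subordinateOrthonormalBasis hd horth',
    fun j i => (hinternal'.subordinateOrthonormalBasisIndex hd i horth').1 j, fun j i => ?_⟩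
  have hmem := hinternal'.subordinateOrthonormalBasis_subordinate hd i horth'
  exact Module.End.mem_eigenspace_iff.1 ((Submodule.mem_iInf _).1 hmem j)

lemma onb_ofLp_orthonormalBasis {d : ℕ}
    (b : OrthonormalBasis (Fin d) ℂ (EuclideanSpace ℂ (Fin d))) :
    ONB d fun i => (b i).ofLp := fun i j => by
  rw [← orthonormal_iff_ite.1 b.orthonormal i j, EuclideanSpace.inner_eq_star_dotProduct,
    dotProduct_comm]

/-- The matrices diagonal in the basis `e`, encoded as the linear combinations of the projectors
`|e i⟩⟨e i|`; no orthonormality is built in. Commuting residual states are those lying in a common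
such subspace. -/
def diagonalSubmodule {ι n : Type*} (e : ι → n → ℂ) : Submodule ℂ (Matrix n n ℂ) :=
  Submodule.span ℂ (Set.range fun i => proj (e i))

lemma proj_mem_diagonalSubmodule {ι n : Type*} (e : ι → n → ℂ) (i : ι) :
    proj (e i) ∈ diagonalSubmodule e :=
  Submodule.subset_span (Set.mem_range_self i)

lemma mem_diagonalSubmodule_iff {ι n : Type*} [Fintype ι] {e : ι → n → ℂ} {X : Matrix n n ℂ} :
    X ∈ diagonalSubmodule e ↔ ∃ c : ι → ℂ, ∑ i, c i • proj (e i) = X :=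
  Submodule.mem_span_range_iff_exists_fun ℂ

variable {d : ℕ}

lemma ONB.commute_of_mem_diagonalSubmodule {e : Fin d → Fin d → ℂ} (he : ONB d e)
    {X Y : Matrix (Fin d) (Fin d) ℂ} (hX : X ∈ diagonalSubmodule e)
    (hY : Y ∈ diagonalSubmodule e) : Commute X Y := by
  obtain ⟨a, rfl⟩ := mem_diagonalSubmodule_iff.1 hX
  obtain ⟨b, rfl⟩ := mem_diagonalSubmodule_iff.1 hY
  exact .sum_left _ _ _ fun i _ => .sum_right _ _ _ fun j _ =>
    ((he.commute_proj i j).smul_left _).smul_right _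

theorem exists_onb_forall_mem_diagonalSubmodule {ι : Type*}
    {ρ : ι → Matrix (Fin d) (Fin d) ℂ} (hρ : ∀ j, (ρ j).IsHermitian)
    (hcomm : ∀ j j', Commute (ρ j) (ρ j')) :
    ∃ e, ONB d e ∧ ∀ j, ρ j ∈ diagonalSubmodule e := by
  have hT : ∀ j, (ρ j).toEuclideanLin.IsSymmetric := fun j =>
    isSymmetric_toEuclideanLin_iff.2 (hρ j)
  have hTcomm : Pairwise (Commute on fun j => (ρ j).toEuclideanLin) := fun j j' _ => by
    simp only [Function.onFun, Commute, SemiconjBy, Module.End.mul_eq_comp, ← toLpLin_mul_same,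
      (hcomm j j').eq]
  obtain ⟨b, χ, hb⟩ :=
    exists_orthonormalBasis_joint_eigenvectors hT hTcomm finrank_euclideanSpace_fin
  refine ⟨_, onb_ofLp_orthonormalBasis b, fun j => mem_diagonalSubmodule_iff.2 ⟨χ j, ?_⟩⟩
  exact ((onb_ofLp_orthonormalBasis b).eq_sum_smul_proj_of_mulVec_eq_smul
    fun i => congrArg WithLp.ofLp (hb j i)).symm

theorem exists_onb_forall_mem_diagonalSubmodule_iff {ι : Type*}
    {ρ : ι → Matrix (Fin d) (Fin d) ℂ} (hρ : ∀ j, (ρ j).IsHermitian) :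
    (∃ e, ONB d e ∧ ∀ j, ρ j ∈ diagonalSubmodule e) ↔ ∀ j j', Commute (ρ j) (ρ j') :=
  ⟨fun ⟨_, he, hmem⟩ j j' => he.commute_of_mem_diagonalSubmodule (hmem j) (hmem j'),
    exists_onb_forall_mem_diagonalSubmodule hρ⟩

theorem IsState.exists_probability_of_mem_diagonalSubmodule {ρ : Matrix (Fin d) (Fin d) ℂ}
    (hρ : IsState ρ) {e : Fin d → Fin d → ℂ} (he : ONB d e) (hmem : ρ ∈ diagonalSubmodule e) :
    ∃ p : Fin d → ℝ, (∀ i, 0 ≤ p i) ∧ ∑ i, p i = 1 ∧ ρ = ∑ i, (p i : ℂ) • proj (e i) := by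
  obtain ⟨c, rfl⟩ := mem_diagonalSubmodule_iff.1 hmem
  have hc_nonneg : ∀ i, 0 ≤ c i := fun i => by
    simpa only [he.sum_smul_proj_mulVec, dotProduct_smul, he.star_dotProduct_self, smul_eq_mul,
      mul_one] using hρ.1.dotProduct_mulVec_nonneg (e i)
  choose p hp_nonneg hp using fun i => RCLike.nonneg_iff_exists_ofReal.1 (hc_nonneg i)
  obtain rfl : (fun i => (p i : ℂ)) = c := funext hp
  refine ⟨p, hp_nonneg, ?_, rfl⟩
  have htrace := hρ.2
  simp only [trace_sum, trace_smul, he.trace_proj_eq_one, smul_eq_mul, mul_one] at htrace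
  exact_mod_cast htrace

end SimultaneousDiagonalization

section Kronecker

lemma sum_kronecker {R ι l m n p : Type*} [NonUnitalNonAssocSemiring R] (s : Finset ι)
    (A : ι → Matrix l m R) (B : Matrix n p R) : (∑ i ∈ s, A i) ⊗ₖ B = ∑ i ∈ s, A i ⊗ₖ B := by
  ext
  simp only [kroneckerMap_apply, Matrix.sum_apply, Finset.sum_mul]

variable {R l m n : Type*} [CommSemiring R] [Star R] [Fintype n]

/-- The partial sandwich `⟨v| M |v⟩` of a bipartite matrix `M` in its second factor, as a linear
map in `M`. On a QC state it recovers the weighted residual states. -/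
def compressRight (v : n → R) : Matrix (l × n) (m × n) R →ₗ[R] Matrix l m R where
  toFun M := Matrix.of fun a a' => star v ⬝ᵥ M.submatrix (Prod.mk a) (Prod.mk a') *ᵥ v
  map_add' M N := by
    ext a a'
    simp only [submatrix_add, Pi.add_apply, add_mulVec, dotProduct_add, Matrix.of_apply,
      Matrix.add_apply]
  map_smul' c M := by
    ext a a'
    simp only [submatrix_smul, Pi.smul_apply, smul_mulVec, dotProduct_smul, Matrix.of_apply,
      Matrix.smul_apply, RingHom.id_apply]

lemma compressRight_kronecker (v : n → R) (X : Matrix l m R) (Y : Matrix n n R) :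
    compressRight v (X ⊗ₖ Y) = (star v ⬝ᵥ Y *ᵥ v) • X := by
  ext a a'
  have hblock : (X ⊗ₖ Y).submatrix (Prod.mk a) (Prod.mk a') = X a a' • Y := rfl
  calc compressRight v (X ⊗ₖ Y) a a' = star v ⬝ᵥ (X a a' • Y) *ᵥ v := by rw [← hblock]; rfl
    _ = ((star v ⬝ᵥ Y *ᵥ v) • X) a a' := by
      rw [smul_mulVec, dotProduct_smul, Matrix.smul_apply, smul_eq_mul, smul_eq_mul, mul_comm]

end Kronecker

section Bipartite

variable {dA dB : ℕ}

lemma ONB.compressRight_sum_kronecker_proj {l m : Type*} {f : Fin dB → Fin dB → ℂ} (hf : ONB dB f)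
    (A : Fin dB → Matrix l m ℂ) (j : Fin dB) :
    compressRight (f j) (∑ k, A k ⊗ₖ proj (f k)) = A j := by
  have hcoeff : ∀ k, star (f j) ⬝ᵥ proj (f k) *ᵥ f j = if k = j then 1 else 0 := fun k => by
    rw [hf.proj_mulVec_eq_ite, apply_ite (star (f j) ⬝ᵥ ·), hf.star_dotProduct_self,
      dotProduct_zero]
  simp only [map_sum, compressRight_kronecker, hcoeff, ite_smul, one_smul, zero_smul,
    Finset.sum_ite_eq', Finset.mem_univ, if_true]

lemma IsCC.exists_onb_forall_compressRight_mem
    {σ : Matrix (Fin dA × Fin dB) (Fin dA × Fin dB) ℂ} (hσ : IsCC σ) :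
    ∃ e, ONB dA e ∧ ∀ v, compressRight v σ ∈ diagonalSubmodule e := by
  obtain ⟨e, g, p, he, -, -, -, rfl⟩ := hσ
  refine ⟨e, he, fun v => ?_⟩
  simp only [map_sum, map_smul, compressRight_kronecker]
  exact Submodule.sum_mem _ fun i _ => Submodule.sum_mem _ fun k _ =>
    Submodule.smul_mem _ _ (Submodule.smul_mem _ _ (proj_mem_diagonalSubmodule e i))

variable {f : Fin dB → Fin dB → ℂ} {q : Fin dB → ℝ} {ρ : Fin dB → Matrix (Fin dA) (Fin dA) ℂ}

theorem exists_onb_forall_mem_diagonalSubmodule_of_isCC (hf : ONB dB f) (hq : ∀ j, q j ≠ 0)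
    (hCC : IsCC (∑ j, (q j : ℂ) • (ρ j ⊗ₖ proj (f j)))) :
    ∃ e, ONB dA e ∧ ∀ j, ρ j ∈ diagonalSubmodule e := by
  obtain ⟨e, he, hmem⟩ := hCC.exists_onb_forall_compressRight_mem
  refine ⟨e, he, fun j => ?_⟩
  have hqρ : (q j : ℂ) • ρ j ∈ diagonalSubmodule e := by
    simpa only [← smul_kronecker, hf.compressRight_sum_kronecker_proj] using hmem (f j)
  exact (Submodule.smul_mem_iff _ (Complex.ofReal_ne_zero.2 (hq j))).1 hqρ

theorem isCC_of_forall_mem_diagonalSubmodule (hf : ONB dB f) (hq : ∀ j, 0 ≤ q j)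
    (hq_sum : ∑ j, q j = 1) (hρ : ∀ j, IsState (ρ j)) {e : Fin dA → Fin dA → ℂ} (he : ONB dA e)
    (hmem : ∀ j, ρ j ∈ diagonalSubmodule e) :
    IsCC (∑ j, (q j : ℂ) • (ρ j ⊗ₖ proj (f j))) := by
  choose p hp_nonneg hp_sum hp using fun j =>
    (hρ j).exists_probability_of_mem_diagonalSubmodule he (hmem j)
  refine ⟨e, f, fun i j => q j * p j i, he, hf, fun i j => mul_nonneg (hq j) (hp_nonneg j i),
    ?_, ?_⟩
  · rw [Finset.sum_comm]
    simp only [← Finset.mul_sum, hp_sum, mul_one, hq_sum]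
  · rw [Finset.sum_comm]
    refine Finset.sum_congr rfl fun j _ => ?_
    simp only [hp j, sum_kronecker, smul_kronecker, Finset.smul_sum, smul_smul,
      Complex.ofReal_mul]

end Bipartite

/-- A QC state (with strictly positive weights) is CC iff its residual states
pairwise commute. -/
theorem qc_state_cc_iff_residuals_commute (dA dB : ℕ)
    (f : Fin dB → Fin dB → ℂ) (hf : ONB dB f)
    (q : Fin dB → ℝ) (hq : ∀ j, 0 < q j) (hq1 : ∑ j, q j = 1)
    (ρ : Fin dB → Matrix (Fin dA) (Fin dA) ℂ) (hρ : ∀ j, IsState (ρ j))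
    (σ : Matrix (Fin dA × Fin dB) (Fin dA × Fin dB) ℂ)
    (hσ : σ = ∑ j, (q j : ℂ) • (ρ j ⊗ₖ proj (f j))) :
    IsCC σ ↔ ∀ j j', ρ j * ρ j' = ρ j' * ρ j := by
  subst hσ
  have hherm : ∀ j, (ρ j).IsHermitian := fun j => (hρ j).1.isHermitian
  calc IsCC (∑ j, (q j : ℂ) • (ρ j ⊗ₖ proj (f j)))
      ↔ ∃ e, ONB dA e ∧ ∀ j, ρ j ∈ diagonalSubmodule e :=
        ⟨exists_onb_forall_mem_diagonalSubmodule_of_isCC hf fun j => (hq j).ne',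
          fun ⟨_, he, hmem⟩ =>
            isCC_of_forall_mem_diagonalSubmodule hf (fun j => (hq j).le) hq1 hρ he hmem⟩
    _ ↔ ∀ j j', ρ j * ρ j' = ρ j' * ρ j := exists_onb_forall_mem_diagonalSubmodule_iff hherm

end
end
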